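/- Let H be a real Hilbert space, let 0 < c₁, c₂ < ∞ with c₁ ≠ c₂, let s ∈ {−1,1}, let J be a unitary operator on H, and let n ∈ H be a unit vector. If a vector w ∈ M(H) satisfies W_{∞,c₁}[s,n,J] w = W_{∞,c₂}[s,n,J] w, then T(w) = 0 and ⟨n,w⟩ = 0. -/

import Mathlib

open scoped InnerProductSpace

/-- Generalized Lorentz transform `W_{λ,c}[s,n,J]` on `M(H) = ℝ × H` (case `λ < ∞`, `c < ∞`). -/
noncomputable def Wfin {H : Type*} [NormedAddCommGroup H] [InnerProductSpace ℝ H]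
    (lam c s : ℝ) (n : H) (J : H ≃ₗᵢ[ℝ] H) (w : ℝ × H) : ℝ × H :=
  ((s * w.1 - lam / c ^ 2 * ⟪n, w.2⟫_ℝ) / Real.sqrt |1 - lam ^ 2 / c ^ 2|,
    J (((lam * w.1 - s * ⟪n, w.2⟫_ℝ) / Real.sqrt |1 - lam ^ 2 / c ^ 2|) • n
      + (w.2 - ⟪n, w.2⟫_ℝ • n)))

/-- Generalized Lorentz transform `W_{λ,∞}[s,n,J]` on `M(H) = ℝ × H` (case `c = ∞`). -/
noncomputable def Wgal {H : Type*} [NormedAddCommGroup H] [InnerProductSpace ℝ H]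
    (lam s : ℝ) (n : H) (J : H ≃ₗᵢ[ℝ] H) (w : ℝ × H) : ℝ × H :=
  (s * w.1, J ((lam * w.1 - s * ⟪n, w.2⟫_ℝ) • n + (w.2 - ⟪n, w.2⟫_ℝ • n)))

/-- Generalized Lorentz transform `W_{∞,c}[s,n,J]` on `M(H) = ℝ × H` (case `λ = ∞`). -/
noncomputable def Wtach {H : Type*} [NormedAddCommGroup H] [InnerProductSpace ℝ H]
    (c s : ℝ) (n : H) (J : H ≃ₗᵢ[ℝ] H) (w : ℝ × H) : ℝ × H :=
  (-⟪n, w.2⟫_ℝ / c, J ((c * w.1) • n + (w.2 - ⟪n, w.2⟫_ℝ • n)))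

section Wtach

variable {H : Type*} [NormedAddCommGroup H] [InnerProductSpace ℝ H]
  {c₁ c₂ : ℝ} {n : H}

theorem Wtach_fst_eq_fst_iff (hc₁ : c₁ ≠ 0) (hc₂ : c₂ ≠ 0) (hcc : c₁ ≠ c₂)
    (s : ℝ) (J : H ≃ₗᵢ[ℝ] H) (w : ℝ × H) :
    (Wtach c₁ s n J w).1 = (Wtach c₂ s n J w).1 ↔ ⟪n, w.2⟫_ℝ = 0 :=
  calc -⟪n, w.2⟫_ℝ / c₁ = -⟪n, w.2⟫_ℝ / c₂
    _ ↔ -⟪n, w.2⟫_ℝ * c₂ = -⟪n, w.2⟫_ℝ * c₁ := div_eq_div_iff hc₁ hc₂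
    _ ↔ -⟪n, w.2⟫_ℝ = 0 := mul_eq_mul_left_iff.trans (or_iff_right hcc.symm)
    _ ↔ ⟪n, w.2⟫_ℝ = 0 := neg_eq_zero

theorem Wtach_snd_eq_snd_iff (hcc : c₁ ≠ c₂) (hn : n ≠ 0)
    (s : ℝ) (J : H ≃ₗᵢ[ℝ] H) (w : ℝ × H) :
    (Wtach c₁ s n J w).2 = (Wtach c₂ s n J w).2 ↔ w.1 = 0 :=
  calc J ((c₁ * w.1) • n + (w.2 - ⟪n, w.2⟫_ℝ • n)) =
        J ((c₂ * w.1) • n + (w.2 - ⟪n, w.2⟫_ℝ • n))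
    _ ↔ (c₁ * w.1) • n = (c₂ * w.1) • n := J.injective.eq_iff.trans (add_left_inj _)
    _ ↔ c₁ * w.1 = c₂ * w.1 := (smul_left_injective ℝ hn).eq_iff
    _ ↔ w.1 = 0 := mul_eq_mul_right_iff.trans (or_iff_right hcc)

theorem stmt8_general (hc₁ : c₁ ≠ 0) (hc₂ : c₂ ≠ 0) (hcc : c₁ ≠ c₂) (hn : n ≠ 0)
    (s : ℝ) (J : H ≃ₗᵢ[ℝ] H) (w : ℝ × H) :
    Wtach c₁ s n J w = Wtach c₂ s n J w ↔ w.1 = 0 ∧ ⟪n, w.2⟫_ℝ = 0 := by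
  rw [Prod.ext_iff, Wtach_fst_eq_fst_iff hc₁ hc₂ hcc, Wtach_snd_eq_snd_iff hcc hn, and_comm]

end Wtach

/-- Lemma, case `λ = ∞`: if `0 < c₁,c₂ < ∞`, `c₁ ≠ c₂` and
`W_{∞,c₁}[s,n,J] w = W_{∞,c₂}[s,n,J] w`, then `T(w) = 0` and `⟨n,w⟩ = 0`. -/
theorem stmt8 {H : Type*} [NormedAddCommGroup H] [InnerProductSpace ℝ H] [CompleteSpace H]
    (c₁ c₂ : ℝ) (hc₁ : 0 < c₁) (hc₂ : 0 < c₂) (hcc : c₁ ≠ c₂)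
    (s : ℝ) (hs : s = 1 ∨ s = -1) (J : H ≃ₗᵢ[ℝ] H) (n : H) (hn : ‖n‖ = 1)
    (w : ℝ × H) (hw : Wtach c₁ s n J w = Wtach c₂ s n J w) :
    w.1 = 0 ∧ ⟪n, w.2⟫_ℝ = 0 :=
  (stmt8_general hc₁.ne' hc₂.ne' hcc (ne_zero_of_norm_ne_zero (hn ▸ one_ne_zero)) s J w).mp hw
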